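/- Let p be an odd prime, l ≥ 0 a natural number, n := (p^{l+1}+1)/2, and k an algebraically closed field of characteristic p. Then for every e ≥ 0, letting e' ∈ {0,…,l} be the residue of e modulo l+1: (i) 4·dim_k k[X,Y,Z]/(X^n+Y^n+Z^n, X^{p^e}, Y^{p^e}, Z^{p^e}) = 3n·(p^{2e} − p^{2e'}) + 4·p^{3e'}; and (ii) there exists a graded isomorphism of shift (3/2)(p^e − p^{e'}) from Syz_R(X^{p^{e'}}, Y^{p^{e'}}, Z^{p^{e'}}) to Syz_R(X^{p^e}, Y^{p^e}, Z^{p^e}). In particular the restricted cotangent bundle on the Fermat curve of degree n admits a twisted (0, l+1)-Frobenius periodicity. -/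

import Mathlib

/-!
Write `n = N + 1`, so that `p ^ (l + 1) = 2 n - 1 = 2 N + 1`. Applying the `p ^ e`-th Frobenius power
to the Fermat relation, `x = X ^ (p ^ e)`, `y`, `z` satisfy `x u + y v + z w = 0` with `u = x ^ N`,
`v = y ^ N`, `w = z ^ N`, while `x u ^ 2 = x ^ (2 N + 1) = X ^ (p ^ (e + l + 1))`, and similarly for
`Y`, `Z`. Everything therefore reduces to comparing `(x, y, z)` with `(x u², y v², z w²)`, and the
claims follow by iterating this step from the residue `e % (l + 1)`.

*Syzygies.* Besides the relation itself only regularity of the variables and `2` being invertible are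
used. The vectors `A = (y v - z w, u y, -u z)` and `B = (-v x, z w - x u, v z)` are syzygies of
`(x u², y v², z w²)`, with cross product `-2 z · (x u², y v², z w²)`. The map
`s ↦ (s₁ A - s₀ B) / z` is defined on all syzygies of `(x, y, z)` (`exists_image`), and taking
cross products of a syzygy with `A` and `B` inverts it (`exists_preimage`). It shifts degrees by
`3 deg u`, `deg u = p ^ e N`; homogeneity passes through the divisions by `IsHomogZ.of_mul`. This is
`gradedIso_step`.

*Dimensions.* Additivity `ℓ(I) = ℓ(I : f) + ℓ(I + (f))` (`lenQ_add`) is applied to the colon ideals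
`C₁ = (y, z) : x` and `C = (x u², y v²) : z w²`. One has `C : u = (v, z)`, by `colon_colon`, and
`(C + (u)) : v = C₁`, by `colon_structure`, with `C + (u, v) = (u, v)`. Hence
`ℓ(x u², y v², z w²) - ℓ(x, y, z)` is a combination of lengths of ideals generated by powers of two
variables, which are explicit (`lenQ_step`). The induction starts at exponents `p ^ r ≤ n`,
where the Fermat polynomial lies in the ideal of the powers and the monomials can be counted
(`length_small`).
-/

open MvPolynomial

set_option synthInstance.maxHeartbeats 1000000
set_option maxHeartbeats 1000000

noncomputable section

abbrev MvP (k : Type*) [Field k] : Type _ := MvPolynomial (Fin 3) k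

/-- The quotient of `k[X,Y,Z]` by the principal ideal generated by `G`. -/
abbrev QuotG {k : Type*} [Field k] (G : MvP k) : Type _ := MvP k ⧸ Ideal.span {G}

def qmk {k : Type*} [Field k] (G : MvP k) : MvP k →+* QuotG G := Ideal.Quotient.mk _

/-- The Fermat polynomial `X^n + Y^n + Z^n`. -/
def fermatPoly (k : Type*) [Field k] (n : ℕ) : MvP k := X 0 ^ n + X 1 ^ n + X 2 ^ n

/-- The Fermat ring `k[X,Y,Z]/(X^n + Y^n + Z^n)`. -/
abbrev FermatRing (k : Type*) [Field k] (n : ℕ) : Type _ := QuotG (fermatPoly k n)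

def fmk (k : Type*) [Field k] (n : ℕ) : MvP k →+* FermatRing k n := qmk _

/-- `x` is the residue class of a homogeneous polynomial of degree `d`. -/
def IsHomog {k : Type*} [Field k] {G : MvP k} (x : QuotG G) (d : ℕ) : Prop :=
  ∃ P : MvP k, P.IsHomogeneous d ∧ qmk G P = x

/-- `x` is zero, or the residue class of a homogeneous polynomial of (integer) degree `d`. -/
def IsHomogZ {k : Type*} [Field k] {G : MvP k} (x : QuotG G) (d : ℤ) : Prop :=
  x = 0 ∨ ∃ d' : ℕ, (d' : ℤ) = d ∧ IsHomog x d'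

def syzMap {k : Type*} [Field k] {G : MvP k} (f : Fin 3 → QuotG G) :
    (Fin 3 → QuotG G) →ₗ[QuotG G] QuotG G where
  toFun g := ∑ i, g i * f i
  map_add' g h := by simp [add_mul, Finset.sum_add_distrib]
  map_smul' c g := by simp [Finset.mul_sum, smul_eq_mul, mul_assoc]

/-- The (first) syzygy module of `f 0, f 1, f 2`: the kernel of
`(g₁,g₂,g₃) ↦ g₁ f₁ + g₂ f₂ + g₃ f₃`. -/
def syz {k : Type*} [Field k] {G : MvP k} (f : Fin 3 → QuotG G) :
    Submodule (QuotG G) (Fin 3 → QuotG G) :=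
  LinearMap.ker (syzMap f)

/-- Membership in the degree-`m` homogeneous component of a syzygy module for
generators of degrees `deg`: each entry is homogeneous of degree `m - deg i` or zero. -/
def inComp {k : Type*} [Field k] {G : MvP k} (deg : Fin 3 → ℤ) (m : ℤ)
    (g : Fin 3 → QuotG G) : Prop :=
  ∀ i, IsHomogZ (g i) (m - deg i)

/-- A graded isomorphism of shift `d` from the syzygy module of `f` (generators of
degrees `df`) to that of `h` (generators of degrees `dh`): a module isomorphism carrying
the degree-`m` homogeneous component onto the degree-`m + d` component, for every `m`. -/
def GradedIso {k : Type*} [Field k] {G : MvP k} (f h : Fin 3 → QuotG G)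
    (df dh : Fin 3 → ℤ) (d : ℤ) : Prop :=
  ∃ e : syz f ≃ₗ[QuotG G] syz h,
    ∀ (m : ℤ) (g : syz f),
      inComp df m (g : Fin 3 → QuotG G) ↔ inComp dh (m + d) ((e g : syz h) : Fin 3 → QuotG G)

/-- The value of the Hilbert-Kunz function of `(X^a, Y^a, Z^a)` in the Fermat ring:
`dim_k k[X,Y,Z]/(X^n + Y^n + Z^n, X^{aq}, Y^{aq}, Z^{aq})`. -/
def HKF (k : Type*) [Field k] (n a q : ℕ) : ℕ :=
  Module.finrank k
    (MvP k ⧸ (Ideal.span {fermatPoly k n, X 0 ^ (a * q), X 1 ^ (a * q), X 2 ^ (a * q)} :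
      Ideal (MvP k)))

/-! ### Relative regularity of ring elements -/

section Abstract

variable {R : Type*} [CommRing R]

/-- `b` is a nonzerodivisor modulo `a`. -/
def RegMod (a b : R) : Prop := ∀ r, a ∣ b * r → a ∣ r

lemma RegMod.mul_right {a b c : R} (h : RegMod a b) (h' : RegMod a c) : RegMod a (b * c) :=
  fun r hr => h' r (h _ (by rwa [← mul_assoc]))

lemma RegMod.mul_left {a b c : R} (ha : IsLeftRegular a) (h : RegMod a c) (h' : RegMod b c) :
    RegMod (a * b) c := by
  intro r hr
  obtain ⟨s, rfl⟩ := h r ((Dvd.intro _ rfl).trans hr)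
  obtain ⟨t, ht⟩ := hr
  obtain ⟨m, rfl⟩ := h' s ⟨t, ha (by simp only; linear_combination ht)⟩
  exact ⟨m, by ring⟩

lemma RegMod.pow_right {a b : R} (h : RegMod a b) (j : ℕ) : RegMod a (b ^ j) := by
  induction j with
  | zero => intro r hr; simpa using hr
  | succ j ih => rw [pow_succ]; exact ih.mul_right h

lemma RegMod.pow_left {a b : R} (ha : IsLeftRegular a) (h : RegMod a b) (i : ℕ) :
    RegMod (a ^ i) b := by
  induction i with
  | zero => intro r _; simp
  | succ j ih => rw [pow_succ]; exact ih.mul_left (ha.pow j) h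

lemma RegMod.pow {a b : R} (ha : IsLeftRegular a) (h : RegMod a b) (i j : ℕ) :
    RegMod (a ^ i) (b ^ j) := (h.pow_left ha i).pow_right j

/-! ### The matrix carrying syzygies of `(x, y, z)` to syzygies of `(x u², y v², z w²)` -/

/-- For `x u + y v + z w = 0`, this is a syzygy of `(x u², y v², z w²)`. -/
def syzA (_x y z u v w : R) : Fin 3 → R :=
  ![y * v - z * w, u * y, -(u * z)]

/-- A second syzygy of `(x u², y v², z w²)`, obtained from `syzA` by cyclic rotation. -/
def syzB (x _y z u v w : R) : Fin 3 → R :=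
  ![-(v * x), z * w - x * u, v * z]

/-- The rational map `s ↦ (s₁ A - s₀ B) / z` is defined on all syzygies of `(x, y, z)`. -/
lemma exists_image {x y z u v w : R} (h : x * u + y * v + z * w = 0) (hz : IsLeftRegular z)
    (hzx : RegMod z x) (s : Fin 3 → R) (hs : s 0 * x + s 1 * y + s 2 * z = 0) :
    ∃ t : Fin 3 → R, (t 0 * (x * u ^ 2) + t 1 * (y * v ^ 2) + t 2 * (z * w ^ 2) = 0) ∧
      ∀ i, z * t i = s 1 * syzA x y z u v w i - s 0 * syzB x y z u v w i := by
  have key : ∀ i, ∃ t, s 1 * syzA x y z u v w i - s 0 * syzB x y z u v w i = z * t := by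
    intro i
    refine hzx _ ?_
    fin_cases i <;> simp [syzA, syzB]
    · exact ⟨s 2 * (-(v * x)) - s 1 * (w * x), by linear_combination (v * x) * hs⟩
    · exact ⟨s 2 * (z * w - x * u) - s 1 * (-(w * y)), by
        linear_combination (-(z * w - x * u)) * hs + 0 * h⟩
    · exact ⟨s 2 * (v * z) - s 1 * (x * u - y * v), by
        linear_combination (-(v * z)) * hs⟩
  choose t ht using key
  refine ⟨t, hz ?_, fun i => (ht i).symm⟩
  have h0 := ht 0
  have h1 := ht 1
  have h2 := ht 2
  simp [syzA, syzB] at h0 h1 h2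
  simp only
  linear_combination (-(x * u ^ 2)) * h0 - (y * v ^ 2) * h1 - (z * w ^ 2) * h2 +
    (s 1 * u * (y * v - z * w) - s 0 * v * (z * w - x * u)) * h

/-- Every syzygy of `(x u², y v², z w²)` arises from one of `(x, y, z)`: cross products with
`A` and `B` recover the preimage, up to the factor `-2`. -/
lemma exists_preimage {x y z u v w : R} (h : x * u + y * v + z * w = 0) (hz : IsLeftRegular z)
    (hw : IsLeftRegular w) (hzu : RegMod z u)
    (hzwxu : RegMod (z * w ^ 2) (x * u ^ 2)) {c : R} (hc : 2 * c = 1)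
    (t : Fin 3 → R) (ht : t 0 * (x * u ^ 2) + t 1 * (y * v ^ 2) + t 2 * (z * w ^ 2) = 0) :
    ∃ s : Fin 3 → R, (s 0 * x + s 1 * y + s 2 * z = 0) ∧
      ∀ i, z * t i = s 1 * syzA x y z u v w i - s 0 * syzB x y z u v w i := by
  obtain ⟨r0, hr0⟩ : z * w ^ 2 ∣ t 0 * (u * y) - t 1 * (y * v - z * w) :=
    hzwxu _ ⟨t 1 * (-(u * z)) - t 2 * (u * y), by
      linear_combination (u * y) * ht - t 1 * u * (y * v - z * w) * h⟩
  obtain ⟨r1, hr1⟩ : z * w ^ 2 ∣ t 0 * (z * w - x * u) - t 1 * (-(v * x)) :=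
    hzwxu _ ⟨t 1 * (v * z) - t 2 * (z * w - x * u), by
      linear_combination (z * w - x * u) * ht - t 1 * v * (z * w - x * u) * h⟩
  have hzw : IsLeftRegular (z * w ^ 2) := hz.mul (hw.pow 2)
  -- the third entry of the cross product of `A` and `B` is `-2 (z w)²`
  have h0 : z * t 0 = (-c * r1) * (y * v - z * w) - (-c * r0) * (-(v * x)) := by
    refine hzw ?_
    simp only
    linear_combination (-c * (y * v - z * w)) * hr1 + c * (-(v * x)) * hr0 +
      c * t 0 * (z * w) * h - (z * w) ^ 2 * t 0 * hc
  have h1 : z * t 1 = (-c * r1) * (u * y) - (-c * r0) * (z * w - x * u) := by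
    refine hzw ?_
    simp only
    linear_combination (-c * (u * y)) * hr1 + c * (z * w - x * u) * hr0 +
      c * t 1 * (z * w) * h - (z * w) ^ 2 * t 1 * hc
  have h2 : z * t 2 = (-c * r1) * (-(u * z)) - (-c * r0) * (v * z) := by
    refine hzw (hzw ?_)
    simp only
    linear_combination z * w ^ 2 * ((-c * (-(u * z))) * hr1 + c * (v * z) * hr0) +
      c * (t 0 * (z * w - x * u) - t 1 * (-(v * x))) * (u * (y * v - z * w)) * h -
      c * (t 0 * (u * y) - t 1 * (y * v - z * w)) * (v * (z * w - x * u)) * h +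
      c * (u * y * (-(v * x)) - (y * v - z * w) * (z * w - x * u)) * ht +
      c * (z * w ^ 2) * t 2 * (z * w) * h - (z * w) ^ 2 * (z * w ^ 2) * t 2 * hc
  obtain ⟨r2, hr2⟩ : z ∣ (-c * r0) * x + (-c * r1) * y :=
    hzu _ ⟨t 1 + w * (-c * r0), by linear_combination -h1⟩
  refine ⟨![-c * r0, -c * r1, -r2], ?_, ?_⟩
  · simp
    linear_combination hr2
  · intro i
    fin_cases i
    · simpa [syzA, syzB] using h0
    · simpa [syzA, syzB] using h1
    · simpa [syzA, syzB] using h2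

/-! ### Colon ideals in the Frobenius step -/

/-- An element of `(x u², y v²) : z w²` lies, up to the factor `2`, in `(u) + v ((y, z) : x)`. -/
lemma colon_structure {x y z u v w : R} (h : x * u + y * v + z * w = 0)
    (hy : IsLeftRegular y) (hu : IsLeftRegular u) (hv : IsLeftRegular v) (hw : IsLeftRegular w)
    (hyvzw : RegMod (y * v) (z * w)) (huv : RegMod u v) (hwv : RegMod w v) (huw : RegMod u w)
    (hyw : RegMod y w) {e α β : R} (he : z * w ^ 2 * e = α * (x * u ^ 2) + β * (y * v ^ 2)) :
    ∃ m g, 2 * e = u * g + v * m ∧ ∃ b d, x * m = y * b + z * d := by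
  obtain ⟨t, ht⟩ : y * v ∣ w * e + α * u :=
    hyvzw _ ⟨β * v - α * u, by linear_combination he + α * u * h⟩
  have ht' : z * w * t = β * v - α * u := by
    refine (hy.mul hv) ?_
    simp only
    linear_combination he + α * u * h - z * w * ht
  obtain ⟨μ, hμ⟩ : u ∣ y * t + β :=
    huv _ ⟨α - x * t, by linear_combination t * h - ht'⟩
  have hμ' : α - x * t = v * μ := by
    refine hu ?_
    simp only
    linear_combination -(t * h - ht') + v * hμ
  obtain ⟨m, hm⟩ : w ∣ 2 * y * t - u * μ :=
    hwv _ ⟨e - z * t, by linear_combination -ht + t * h + u * hμ'⟩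
  have hm' : e - z * t = v * m := by
    refine hw ?_
    simp only
    linear_combination ht - t * h - u * hμ' + v * hm
  obtain ⟨g, hg⟩ : u ∣ v * m + 2 * z * t :=
    huw _ ⟨-(v * μ + 2 * x * t), by linear_combination 2 * t * h - v * hm⟩
  obtain ⟨b, hb⟩ : y ∣ x * m - z * μ :=
    hyw _ ⟨2 * x * t + v * μ, by linear_combination -x * hm - μ * h⟩
  exact ⟨m, g, by linear_combination 2 * hm' + hg, b, μ, by linear_combination hb⟩

/-- The colon ideal `((x u², y v²) : z w²) : u` is contained in `(v, z)`. -/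
lemma colon_colon {x y z u v w : R} (h : x * u + y * v + z * w = 0)
    (hy : IsLeftRegular y) (hu : IsLeftRegular u) (hv : IsLeftRegular v)
    (hyvzw : RegMod (y * v) (z * w)) (huyv : RegMod u (y * v ^ 2)) (hvw : RegMod v w)
    {r α β : R} (he : z * w ^ 2 * (u * r) = α * (x * u ^ 2) + β * (y * v ^ 2)) :
    ∃ a b, a * v + b * z = r := by
  obtain ⟨β', rfl⟩ : u ∣ β := huyv _ ⟨z * w ^ 2 * r - α * x * u, by linear_combination -he⟩
  have h1 : z * w ^ 2 * r = α * (x * u) + β' * (y * v ^ 2) := by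
    refine hu ?_
    simp only
    linear_combination he
  obtain ⟨t, ht⟩ : y * v ∣ w * r + α :=
    hyvzw _ ⟨β' * v - α, by linear_combination h1 + α * h⟩
  have ht' : z * w * t = β' * v - α := by
    refine (hy.mul hv) ?_
    simp only
    linear_combination h1 + α * h - z * w * ht
  obtain ⟨m, hm⟩ : v ∣ r - z * t :=
    hvw _ ⟨y * t - β', by linear_combination ht - ht'⟩
  exact ⟨m, t, by linear_combination -hm⟩

/-! ### Lengths of quotients by ideals -/

section Length

variable (k : Type*) [Field k] [Algebra k R]

/-- The `k`-dimension of `R / I`, as an extended natural number. -/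
def lenQ (I : Ideal R) : ℕ∞ := Module.length k (R ⧸ I)

/-- Additivity along `0 → R / (I : f) → R / I → R / (I + (f)) → 0`. -/
lemma lenQ_add {I J K : Ideal R} (f : R) (hJ : ∀ r, r ∈ J ↔ f * r ∈ I)
    (hK : I ⊔ Ideal.span {f} = K) : lenQ k I = lenQ k J + lenQ k K := by
  have hIK : I ≤ K := hK ▸ le_sup_left
  have hle : J ≤ Submodule.comap (LinearMap.mulLeft R f) I := fun r hr => (hJ r).1 hr
  let φ : (R ⧸ J) →ₗ[R] (R ⧸ I) := Submodule.mapQ J I (LinearMap.mulLeft R f) hle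
  let ψ : (R ⧸ I) →ₗ[R] (R ⧸ K) := Submodule.factor hIK
  refine Module.length_eq_add_of_exact (φ.restrictScalars k) (ψ.restrictScalars k) ?_ ?_ ?_
  · change Function.Injective φ
    rw [← LinearMap.ker_eq_bot, LinearMap.ker_eq_bot']
    intro a ha
    obtain ⟨r, rfl⟩ := Submodule.Quotient.mk_surjective _ a
    simp only [φ, Submodule.mapQ_apply, LinearMap.mulLeft_apply] at ha
    rw [Submodule.Quotient.mk_eq_zero] at ha ⊢
    exact (hJ r).2 ha
  · exact Submodule.factor_surjective hIK
  · change Function.Exact φ ψ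
    intro a
    obtain ⟨r, rfl⟩ := Submodule.Quotient.mk_surjective _ a
    have : ψ (Submodule.Quotient.mk r) = 0 ↔ r ∈ K :=
      Submodule.Quotient.mk_eq_zero K
    rw [this, ← hK, Submodule.mem_sup]
    constructor
    · rintro ⟨i, hi, j, hj, rfl⟩
      obtain ⟨s, rfl⟩ := Ideal.mem_span_singleton.1 hj
      refine ⟨Submodule.Quotient.mk s, ?_⟩
      simp only [φ, Submodule.mapQ_apply, LinearMap.mulLeft_apply]
      rw [Submodule.Quotient.eq]
      simpa using hi
    · rintro ⟨b, hb⟩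
      obtain ⟨s, rfl⟩ := Submodule.Quotient.mk_surjective _ b
      simp only [φ, Submodule.mapQ_apply, LinearMap.mulLeft_apply] at hb
      rw [Submodule.Quotient.eq] at hb
      exact ⟨r - f * s, by simpa using I.neg_mem hb, f * s,
        Ideal.mem_span_singleton.2 ⟨s, rfl⟩, by ring⟩

lemma lenQ_top : lenQ k (⊤ : Ideal R) = 0 := by
  have : Subsingleton (R ⧸ (⊤ : Ideal R)) := Ideal.Quotient.subsingleton_iff.2 rfl
  exact Module.length_eq_zero

lemma lenQ_pow_left {x y : R} (hx : IsLeftRegular x) (hxy : RegMod x y) (i : ℕ) :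
    lenQ k (Ideal.span {x ^ i, y}) = i * lenQ k (Ideal.span {x, y}) := by
  induction i with
  | zero =>
    rw [show Ideal.span {x ^ 0, y} = ⊤ from
      (Ideal.eq_top_iff_one _).2 (Ideal.subset_span (by simp)), lenQ_top]
    simp
  | succ i ih =>
    rw [lenQ_add k (J := Ideal.span {x, y}) (K := Ideal.span {x ^ i, y}) (x ^ i), ih]
    · push_cast; ring
    · intro r
      simp only [Ideal.mem_span_pair]
      constructor
      · rintro ⟨a, b, rfl⟩
        exact ⟨a, b * x ^ i, by ring⟩
      · rintro ⟨a, b, hab⟩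
        obtain ⟨b', rfl⟩ := hxy.pow_left hx i b ⟨r - a * x, by linear_combination hab⟩
        refine ⟨a, b', (hx.pow i) ?_⟩
        simp only
        linear_combination hab
    · apply le_antisymm
      · simp only [sup_le_iff, Ideal.span_le, Set.insert_subset_iff, Set.singleton_subset_iff,
          SetLike.mem_coe, Ideal.mem_span_pair]
        exact ⟨⟨⟨x, 0, by ring⟩, ⟨0, 1, by ring⟩⟩, ⟨1, 0, by ring⟩⟩
      · simp only [Ideal.span_le, Set.insert_subset_iff, Set.singleton_subset_iff, SetLike.mem_coe]
        exact ⟨Ideal.mem_sup_right (Ideal.subset_span rfl),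
          Ideal.mem_sup_left (Ideal.subset_span (by simp))⟩

lemma lenQ_pow {x y : R} (hx : IsLeftRegular x) (hy : IsLeftRegular y) (hxy : RegMod x y)
    (hyx : RegMod y x) (i j : ℕ) :
    lenQ k (Ideal.span {x ^ i, y ^ j}) = i * j * lenQ k (Ideal.span {x, y}) := by
  rw [lenQ_pow_left k hx (hxy.pow_right j), Set.pair_comm, lenQ_pow_left k hy hyx, Set.pair_comm,
    mul_assoc]

/-- The colon ideal `I : f`. -/
def colonI (I : Ideal R) (f : R) : Ideal R := Submodule.comap (LinearMap.mulLeft R f) I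

lemma mem_colonI {I : Ideal R} {f r : R} : r ∈ colonI I f ↔ f * r ∈ I := Iff.rfl

/-- How `dim R / (x, y, z)` changes when the generators `x, y, z` with `xⁿ + yⁿ + zⁿ = 0`
are raised to the power `2 n - 1`, where `n = N + 1`. -/
theorem lenQ_step {x y z : R} {N : ℕ} (h : x ^ (N + 1) + y ^ (N + 1) + z ^ (N + 1) = 0)
    (hx : IsLeftRegular x) (hy : IsLeftRegular y) (hz : IsLeftRegular z)
    (hxy : RegMod x y) (hyx : RegMod y x) (hxz : RegMod x z) (hyz : RegMod y z)
    (hzy : RegMod z y) {c : R} (hc : 2 * c = 1) {a : ℕ∞}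
    (axy : lenQ k (Ideal.span {x, y}) = a) (ayz : lenQ k (Ideal.span {y, z}) = a) :
    lenQ k (Ideal.span {x ^ (2 * N + 1), y ^ (2 * N + 1), z ^ (2 * N + 1)}) +
      (N * (N + 1) + 1) * a = (2 * N + 1) ^ 2 * a + lenQ k (Ideal.span {x, y, z}) := by
  have h' : x * x ^ N + y * y ^ N + z * z ^ N = 0 := by linear_combination h
  have e1 : ∀ x : R, x ^ (2 * N + 1) = x * (x ^ N) ^ 2 := fun x => by ring
  have hsup : ∀ x y z : R, Ideal.span {x, y} ⊔ Ideal.span {z} = Ideal.span {x, y, z} := by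
    intro x y z
    rw [← Ideal.span_union]
    congr 1
    ext; simp; tauto
  have hyv : RegMod (y * y ^ N) (z * z ^ N) := by
    simpa [pow_succ'] using hyz.pow hy (N + 1) (N + 1)
  -- the colon ideal `C₁` of the small generators and the colon ideal `C` of the big ones
  set C₁ := colonI (Ideal.span {y, z}) x with hC₁
  set C := colonI (Ideal.span {x ^ (2 * N + 1), y ^ (2 * N + 1)}) (z ^ (2 * N + 1)) with hC
  have s1 := lenQ_add k (I := Ideal.span {y, z}) (J := C₁) x (fun r => mem_colonI) (hsup y z x)
  have s2 := lenQ_add k (I := Ideal.span {x ^ (2 * N + 1), y ^ (2 * N + 1)}) (J := C)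
    (z ^ (2 * N + 1)) (fun r => mem_colonI) (hsup _ _ _)
  have hmemC : ∀ r, r ∈ C ↔ ∃ α β, z * (z ^ N) ^ 2 * r =
      α * (x * (x ^ N) ^ 2) + β * (y * (y ^ N) ^ 2) := by
    intro r
    rw [hC, mem_colonI, Ideal.mem_span_pair]
    simp only [e1, eq_comm]
  have s3 := lenQ_add k (I := C) (J := Ideal.span {y ^ N, z}) (K := C ⊔ Ideal.span {x ^ N})
    (x ^ N) (by
      intro r
      rw [hmemC]
      constructor
      · intro hr
        obtain ⟨p, q, rfl⟩ := Ideal.mem_span_pair.1 hr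
        refine ⟨-(p * z ^ N * y ^ N) + q * (x * x ^ N + 2 * y * y ^ N),
          -(p * z ^ N * x ^ N) + q * y * x ^ N, ?_⟩
        linear_combination (p * z ^ N * x ^ N * y ^ N +
          q * x ^ N * (z * z ^ N - x * x ^ N - y * y ^ N)) * h'
      · rintro ⟨α, β, he⟩
        exact Ideal.mem_span_pair.2 (colon_colon h' hy (hx.pow N) (hy.pow N) hyv
          ((hxy.pow_left hx N).mul_right ((hxy.pow hx N N).pow_right 2)) (hyz.pow hy N N) he)) rfl
  have hstr : ∀ r ∈ C, ∃ m g, 2 * r = x ^ N * g + y ^ N * m ∧ ∃ b d, x * m = y * b + z * d := by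
    intro r hr
    obtain ⟨α, β, he⟩ := (hmemC r).1 hr
    exact colon_structure h' hy (hx.pow N) (hy.pow N) (hz.pow N) hyv (hxy.pow hx N N)
      (hzy.pow hz N N) (hxz.pow hx N N) (hyz.pow_right N) he
  have s4 := lenQ_add k (I := C ⊔ Ideal.span {x ^ N}) (J := C₁) (K := Ideal.span {x ^ N, y ^ N})
    (y ^ N) (by
      intro r
      rw [hC₁, mem_colonI, Ideal.mem_span_pair]
      constructor
      · rintro ⟨p, q, hpq⟩
        refine Submodule.mem_sup.2 ⟨y ^ N * r - x ^ N * p, ?_, x ^ N * p,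
          Ideal.mem_span_singleton.2 ⟨p, rfl⟩, by ring⟩
        rw [hmemC]
        refine ⟨z ^ N * p + y ^ N * q, -(z ^ N * r) + x ^ N * q, ?_⟩
        linear_combination (z ^ N * (y ^ N * r - x ^ N * p) - x ^ N * y ^ N * q) * h' +
          z ^ N * x ^ N * y ^ N * hpq
      · intro hr
        obtain ⟨e, he, f, hf, hef⟩ := Submodule.mem_sup.1 hr
        obtain ⟨f, rfl⟩ := Ideal.mem_span_singleton.1 hf
        obtain ⟨m, g, hm, b, d, hbd⟩ := hstr e he
        obtain ⟨l, hl⟩ : x ^ N ∣ r - c * m := hxy.pow hx N N _ ⟨c * g + f, by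
          linear_combination -hef + c * hm - e * hc⟩
        exact ⟨c * b - l * y ^ N, c * d - l * z ^ N, by
          linear_combination -x * hl - c * hbd - l * h'⟩) (by
      apply le_antisymm
      · refine sup_le (sup_le ?_ ?_) ?_
        · intro r hr
          obtain ⟨m, g, hm, -⟩ := hstr r hr
          exact Ideal.mem_span_pair.2 ⟨c * g, c * m, by linear_combination -c * hm + r * hc⟩
        · exact Ideal.span_mono (by simp)
        · exact Ideal.span_mono (by simp)
      · rw [Ideal.span_insert]
        exact sup_le_sup_right le_sup_right _)
  have t1 : lenQ k (Ideal.span {y ^ N, z}) = N * a := by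
    rw [lenQ_pow_left k hy hyz, ayz]
  have t2 := lenQ_pow k hx hy hxy hyx N N
  have t3 := lenQ_pow k hx hy hxy hyx (2 * N + 1) (2 * N + 1)
  rw [axy] at t2 t3
  rw [show ({y, z, x} : Set R) = {x, y, z} by ext; simp; tauto, ayz] at s1
  rw [s3, s4, t1, t2, t3] at s2
  push_cast at s2
  set L := lenQ k (Ideal.span {x ^ (2 * N + 1), y ^ (2 * N + 1), z ^ (2 * N + 1)})
  set M := lenQ k (Ideal.span {x, y, z})
  calc L + (N * (N + 1) + 1) * a = L + N * (N + 1) * a + a := by ring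
    _ = L + N * (N + 1) * a + (lenQ k C₁ + M) := by rw [← s1]
    _ = (N * a + (lenQ k C₁ + N * N * a) + L) + M := by ring
    _ = _ := by rw [← s2]; ring

end Length

end Abstract

/-! ### Homogeneous elements of a quotient by a homogeneous polynomial -/

section Graded

attribute [local instance] MvPolynomial.gradedAlgebra

variable {k : Type*} [Field k]

lemma homogeneousComponent_mul_left {W P : MvP k} {e : ℕ} (hW : W.IsHomogeneous e) (n : ℕ) :
    homogeneousComponent n (W * P) =
      if e ≤ n then W * homogeneousComponent (n - e) P else 0 := by
  have hd : ∀ (p : MvP k) (i : ℕ),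
      (DirectSum.decompose (homogeneousSubmodule (Fin 3) k) p i : MvP k) =
        homogeneousComponent i p := decomposition.decompose'_apply
  rw [← hd, ← hd]
  exact DirectSum.coe_decompose_mul_of_left_mem (homogeneousSubmodule (Fin 3) k) n
    ((mem_homogeneousSubmodule _ _).2 hW)

variable {G : MvP k}

lemma IsHomogZ.mul {a b : QuotG G} {i j : ℤ} (ha : IsHomogZ a i) (hb : IsHomogZ b j) :
    IsHomogZ (a * b) (i + j) := by
  rcases ha with rfl | ⟨i', rfl, P, hP, rfl⟩
  · left; simp
  rcases hb with rfl | ⟨j', rfl, Q, hQ, rfl⟩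
  · left; simp
  exact Or.inr ⟨i' + j', by push_cast; ring, P * Q, hP.mul hQ, map_mul _ _ _⟩

lemma IsHomogZ.sub {a b : QuotG G} {i : ℤ} (ha : IsHomogZ a i) (hb : IsHomogZ b i) :
    IsHomogZ (a - b) i := by
  rcases ha with rfl | ⟨i', hi, P, hP, rfl⟩
  · rcases hb with rfl | ⟨j', hj, Q, hQ, rfl⟩
    · left; simp
    · exact Or.inr ⟨j', hj, -Q, hQ.neg, by simp⟩
  · rcases hb with rfl | ⟨j', hj, Q, hQ, rfl⟩
    · exact Or.inr ⟨i', hi, P, hP, by simp⟩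
    · obtain rfl : i' = j' := by omega
      exact Or.inr ⟨i', hi, P - Q, hP.sub hQ, map_sub _ _ _⟩

lemma IsHomogZ.neg {a : QuotG G} {i : ℤ} (ha : IsHomogZ a i) : IsHomogZ (-a) i := by
  simpa using (show IsHomogZ (0 : QuotG G) i from Or.inl rfl).sub ha

lemma isHomogZ_mk {P : MvP k} {d : ℕ} (hP : P.IsHomogeneous d) : IsHomogZ (qmk G P) d :=
  Or.inr ⟨d, rfl, P, hP, rfl⟩

lemma isHomogZ_C (c : k) : IsHomogZ (qmk G (C c)) 0 := isHomogZ_mk (isHomogeneous_C _ c)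

lemma qmk_eq_zero {P : MvP k} : qmk G P = 0 ↔ P ∈ Ideal.span {G} :=
  Ideal.Quotient.eq_zero_iff_mem

/-- Homogeneity descends along division by a homogeneous nonzerodivisor. -/
lemma IsHomogZ.of_mul {g : ℕ} (hG : G.IsHomogeneous g) {W : MvP k} {e : ℕ}
    (hW : W.IsHomogeneous e) (hreg : IsLeftRegular (qmk G W)) {r : QuotG G} {d : ℤ}
    (h : IsHomogZ (qmk G W * r) (d + e)) : IsHomogZ r d := by
  have hI : (Ideal.span {G}).IsHomogeneous (homogeneousSubmodule (Fin 3) k) := by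
    refine Ideal.homogeneous_span _ _ ?_
    rintro x rfl
    exact ⟨g, hG⟩
  have hzero : qmk G W * r = 0 → r = 0 := fun h0 => hreg (by simpa using h0)
  rcases h with h | ⟨D, hD, H, hH, hHW⟩
  · exact Or.inl (hzero h)
  obtain ⟨P, rfl⟩ := Ideal.Quotient.mk_surjective r
  change qmk G H = qmk G W * qmk G P at hHW
  change qmk G W * qmk G P = 0 → qmk G P = 0 at hzero
  change IsHomogZ (qmk G P) d
  have hmem : W * P - H ∈ Ideal.span {G} := by
    rw [← qmk_eq_zero, map_sub, map_mul, hHW, sub_self]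
  have hc := homogeneousComponent_mem_of_mem hI hmem D
  rw [map_sub, homogeneousComponent_mul_left hW, homogeneousComponent_eq_self hH] at hc
  split_ifs at hc with hle
  · refine Or.inr ⟨D - e, by omega, homogeneousComponent (D - e) P,
      homogeneousComponent_isHomogeneous _ _, hreg ?_⟩
    simp only
    rw [← hHW, ← map_mul, ← sub_eq_zero, ← map_sub, qmk_eq_zero]
    exact hc
  · refine Or.inl (hzero ?_)
    rw [← hHW, qmk_eq_zero]
    simpa using (Ideal.span {G}).neg_mem hc

/-! ### The isomorphism of syzygy modules -/

lemma mem_syz {f s : Fin 3 → QuotG G} :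
    s ∈ syz f ↔ s 0 * f 0 + s 1 * f 1 + s 2 * f 2 = 0 := by
  rw [syz, LinearMap.mem_ker]
  simp [syzMap, Fin.sum_univ_three]

lemma GradedIso.refl (f : Fin 3 → QuotG G) (df : Fin 3 → ℤ) : GradedIso f f df df 0 :=
  ⟨LinearEquiv.refl _ _, fun m g => by simp⟩

lemma GradedIso.trans {f g h : Fin 3 → QuotG G} {df dg dh : Fin 3 → ℤ} {a b : ℤ}
    (H : GradedIso f g df dg a) (H' : GradedIso g h dg dh b) : GradedIso f h df dh (a + b) := by
  obtain ⟨e, he⟩ := H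
  obtain ⟨e', he'⟩ := H'
  refine ⟨e.trans e', fun m s => ?_⟩
  rw [he, he', add_assoc]
  rfl

/-- The syzygies of `(fᵢ)` and of `(fᵢ gᵢ²)` agree up to shift when `f₀ g₀ + f₁ g₁ + f₂ g₂ = 0`. -/
theorem gradedIso_step {γ : ℕ} (hG : G.IsHomogeneous γ) {F W : Fin 3 → MvP k} {Q D : ℕ}
    (hF : ∀ i, (F i).IsHomogeneous Q) (hW : ∀ i, (W i).IsHomogeneous D)
    {f g : Fin 3 → QuotG G} (hf : ∀ i, qmk G (F i) = f i) (hg : ∀ i, qmk G (W i) = g i)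
    (h : f 0 * g 0 + f 1 * g 1 + f 2 * g 2 = 0)
    (hz : IsLeftRegular (f 2)) (hw : IsLeftRegular (g 2)) (hzx : RegMod (f 2) (f 0))
    (hzu : RegMod (f 2) (g 0)) (hzw : RegMod (f 2 * g 2 ^ 2) (f 0 * g 0 ^ 2))
    {c : k} (hc : 2 * c = 1) :
    GradedIso f (fun i => f i * g i ^ 2) (fun _ => Q) (fun _ => ((Q + 2 * D : ℕ) : ℤ))
      ((3 * D : ℕ) : ℤ) := by
  set c' : QuotG G := qmk G (C c) with hcdef
  have hc' : 2 * c' = 1 := by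
    rw [hcdef, ← map_ofNat (qmk G) 2, ← map_mul, ← map_one (qmk G), ← C_1, ← hc, C_mul]
    congr 1
  set A := syzA (f 0) (f 1) (f 2) (g 0) (g 1) (g 2) with hA
  set B := syzB (f 0) (f 1) (f 2) (g 0) (g 1) (g 2) with hB
  have hinj : ∀ {t t' : Fin 3 → QuotG G}, (∀ i, f 2 * t i = f 2 * t' i) → t = t' :=
    fun H => funext fun i => hz (H i)
  have key := exists_image h hz hzx
  have hex : ∀ s : syz f, ∃ t : syz (fun i => f i * g i ^ 2),
      ∀ i, f 2 * t.1 i = s.1 1 * A i - s.1 0 * B i := by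
    intro s
    obtain ⟨t, ht, ht'⟩ := key s.1 (mem_syz.1 s.2)
    exact ⟨⟨t, mem_syz.2 ht⟩, ht'⟩
  choose φ hφ using hex
  have recover : ∀ s : syz f,
      (φ s).1 0 * A 1 - (φ s).1 1 * A 0 = f 2 * g 2 ^ 2 * (-2 * s.1 0) ∧
      (φ s).1 0 * B 1 - (φ s).1 1 * B 0 = f 2 * g 2 ^ 2 * (-2 * s.1 1) := by
    intro s
    have h0 := hφ s 0
    have h1 := hφ s 1
    simp [hA, hB, syzA, syzB] at h0 h1 ⊢
    refine ⟨hz ?_, hz ?_⟩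
    · simp only
      linear_combination (g 0 * f 1) * h0 - (f 1 * g 1 - f 2 * g 2) * h1 +
        s.1 0 * (f 2 * g 2) * h
    · simp only
      linear_combination (f 2 * g 2 - f 0 * g 0) * h0 + (g 1 * f 0) * h1 +
        s.1 1 * (f 2 * g 2) * h
  have hzw' : IsLeftRegular (f 2 * g 2 ^ 2) := hz.mul (hw.pow 2)
  let Φ : syz f →ₗ[QuotG G] syz (fun i => f i * g i ^ 2) :=
    { toFun := φ
      map_add' := fun s s' => Subtype.ext <| hinj fun i => by
        have h1 := hφ s i
        have h2 := hφ s' i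
        have h3 := hφ (s + s') i
        simp only [Submodule.coe_add, Pi.add_apply] at h3 ⊢
        linear_combination h3 - h1 - h2
      map_smul' := fun a s => Subtype.ext <| hinj fun i => by
        have h1 := hφ s i
        have h3 := hφ (a • s) i
        simp only [Submodule.coe_smul, Pi.smul_apply, smul_eq_mul, RingHom.id_apply] at h3 ⊢
        linear_combination h3 - a * h1 }
  have hbij : Function.Bijective Φ := by
    constructor
    · rw [← LinearMap.ker_eq_bot, LinearMap.ker_eq_bot']
      intro s hs
      obtain ⟨r0, r1⟩ := recover s
      have hs' : φ s = 0 := hs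
      rw [hs'] at r0 r1
      simp only [Submodule.coe_zero, Pi.zero_apply, zero_mul, sub_zero] at r0 r1
      have e0 : -2 * s.1 0 = 0 := hzw' (by simpa using r0.symm)
      have e1 : -2 * s.1 1 = 0 := hzw' (by simpa using r1.symm)
      have e0' : s.1 0 = 0 := by linear_combination -c' * e0 - s.1 0 * hc'
      have e1' : s.1 1 = 0 := by linear_combination -c' * e1 - s.1 1 * hc'
      have e2 := mem_syz.1 s.2
      have e2' : s.1 2 = 0 := hz (by
        simp only
        linear_combination e2 - f 0 * e0' - f 1 * e1')
      ext i
      fin_cases i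
      · simpa using e0'
      · simpa using e1'
      · simpa using e2'
    · intro t
      obtain ⟨s, hs, hs'⟩ := exists_preimage h hz hw hzu hzw hc' t.1 (mem_syz.1 t.2)
      refine ⟨⟨s, mem_syz.2 hs⟩, Subtype.ext <| hinj fun i => ?_⟩
      exact (hφ ⟨s, mem_syz.2 hs⟩ i).trans (hs' i).symm
  have hfd : ∀ i, IsHomogZ (f i) Q := fun i => hf i ▸ isHomogZ_mk (hF i)
  have hgd : ∀ i, IsHomogZ (g i) D := fun i => hg i ▸ isHomogZ_mk (hW i)
  have hfg : ∀ i j, IsHomogZ (f i * g j) (Q + D) := fun i j => (hfd i).mul (hgd j)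
  have hgf : ∀ i j, IsHomogZ (g j * f i) (Q + D) := fun i j => mul_comm (f i) (g j) ▸ hfg i j
  have hAd : ∀ i, IsHomogZ (A i) (Q + D) := by
    intro i
    fin_cases i
    · exact (hfg 1 1).sub (hfg 2 2)
    · exact hgf 1 0
    · exact (hgf 2 0).neg
  have hBd : ∀ i, IsHomogZ (B i) (Q + D) := by
    intro i
    fin_cases i
    · exact (hgf 0 1).neg
    · exact (hfg 2 2).sub (hfg 0 0)
    · exact hgf 2 1
  have cancelz : ∀ {r : QuotG G} {d : ℤ}, IsHomogZ (f 2 * r) (d + Q) → IsHomogZ r d := by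
    intro r d hr
    rw [← hf 2] at hr hz
    exact hr.of_mul hG (hF 2) hz
  have cancelzw : ∀ {r : QuotG G} {d : ℤ}, IsHomogZ (f 2 * g 2 ^ 2 * (-2 * r)) (d + (Q + D * 2)) →
      IsHomogZ r d := by
    intro r d hr
    rw [← hf 2, ← hg 2, ← map_pow, ← map_mul] at hr hzw'
    have h1 := IsHomogZ.of_mul (d := d) hG ((hF 2).mul ((hW 2).pow 2)) hzw' (by
      push_cast; exact hr)
    have h2 := ((isHomogZ_C (G := G) c).mul h1).neg
    rw [← hcdef, zero_add] at h2
    convert h2 using 1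
    linear_combination -r * hc'
  refine ⟨LinearEquiv.ofBijective Φ hbij, fun m s => ?_⟩
  change _ ↔ inComp _ _ (φ s).1
  constructor
  · intro hs i
    refine cancelz ?_
    rw [hφ s i]
    convert ((hs 1).mul (hAd i)).sub ((hs 0).mul (hBd i)) using 1
    push_cast; ring
  · intro ht
    obtain ⟨r0, r1⟩ := recover s
    have h0 : IsHomogZ (s.1 0) (m - Q) := by
      refine cancelzw ?_
      rw [← r0]
      convert ((ht 0).mul (hAd 1)).sub ((ht 1).mul (hAd 0)) using 1
      push_cast; ring
    have h1 : IsHomogZ (s.1 1) (m - Q) := by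
      refine cancelzw ?_
      rw [← r1]
      convert ((ht 0).mul (hBd 1)).sub ((ht 1).mul (hBd 0)) using 1
      push_cast; ring
    intro i
    fin_cases i
    · exact h0
    · exact h1
    · change IsHomogZ (s.1 2) (m - Q)
      refine cancelz ?_
      convert (h0.mul (hfd 0)).neg.sub (h1.mul (hfd 1)) using 1
      linear_combination mem_syz.1 s.2

end Graded

/-! ### Regular sequences in the Fermat ring -/

section Fermat

variable {k : Type*} [Field k] {n : ℕ}

lemma fermatPoly_eq_sum : fermatPoly k n = ∑ m, X m ^ n := by
  simp [fermatPoly, Fin.sum_univ_three]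

lemma fermatPoly_isHomogeneous : (fermatPoly k n).IsHomogeneous n := by
  rw [fermatPoly_eq_sum]
  exact IsHomogeneous.sum _ _ _ fun i _ => isHomogeneous_X_pow i n

lemma exists_third : ∀ i j : Fin 3, i ≠ j → ∃ l, l ≠ i ∧ l ≠ j ∧ ∀ m, m = i ∨ m = j ∨ m = l := by
  decide

lemma fmk_eq_zero {P : MvP k} : fmk k n P = 0 ↔ fermatPoly k n ∣ P :=
  qmk_eq_zero.trans Ideal.mem_span_singleton

lemma fermat_isLeftRegular (hn : 0 < n) (i : Fin 3) : IsLeftRegular (fmk k n (X i)) := by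
  intro a b hab
  obtain ⟨a, rfl⟩ := Ideal.Quotient.mk_surjective a
  obtain ⟨b, rfl⟩ := Ideal.Quotient.mk_surjective b
  change fmk k n (X i) * fmk k n a = fmk k n (X i) * fmk k n b at hab
  change fmk k n a = fmk k n b
  rw [← sub_eq_zero, ← map_mul, ← map_mul, ← map_sub, ← mul_sub, fmk_eq_zero] at hab
  rw [← sub_eq_zero, ← map_sub, fmk_eq_zero]
  obtain ⟨g, hg⟩ := hab
  rcases (X_prime (R := k) (i := i)).dvd_or_dvd (Dvd.intro _ hg) with ⟨f, hf⟩ | ⟨f, rfl⟩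
  · -- evaluating at a coordinate point off the line `X i = 0` shows that `X i` does not divide `F`
    exfalso
    obtain ⟨j, hj⟩ := exists_ne i
    have := congrArg (eval (Pi.single j (1 : k))) hf
    rw [fermatPoly_eq_sum, map_sum, Finset.sum_eq_single j] at this
    · simp [hj.symm] at this
    · intro m _ hm
      simp [hm, hn.ne']
    · simp
  · refine ⟨f, mul_left_cancel₀ (X_ne_zero (R := k) i) ?_⟩
    linear_combination hg

/-- Any two distinct variables form a regular sequence in the Fermat ring. -/
lemma fermat_regMod (hn : 0 < n) (i j : Fin 3) (hij : i ≠ j) :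
    RegMod (fmk k n (X i)) (fmk k n (X j)) := by
  obtain ⟨l, hli, hlj, hl⟩ := exists_third i j hij
  rintro r ⟨s, hs⟩
  obtain ⟨r, rfl⟩ := Ideal.Quotient.mk_surjective r
  obtain ⟨s, rfl⟩ := Ideal.Quotient.mk_surjective s
  change fmk k n (X j) * fmk k n r = fmk k n (X i) * fmk k n s at hs
  change _ ∣ fmk k n r
  rw [← sub_eq_zero, ← map_mul, ← map_mul, ← map_sub, fmk_eq_zero] at hs
  obtain ⟨g, hg⟩ := hs
  -- reduction modulo `(X i, X j)`, where `F` becomes a power of the remaining variable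
  let v : Fin 3 → MvP k := fun m => if m = l then X l else 0
  let I : Ideal (MvP k) := Ideal.span {X i, X j}
  have hθ : ∀ P : MvP k, P - aeval v P ∈ I := by
    intro P
    have : ((Ideal.Quotient.mkₐ k I).comp (aeval v)) = Ideal.Quotient.mkₐ k I := by
      refine algHom_ext fun m => ?_
      simp only [AlgHom.comp_apply, aeval_X, Ideal.Quotient.mkₐ_eq_mk]
      rcases hl m with rfl | rfl | rfl
      · simp only [v, if_neg hli.symm, map_zero]
        exact (Ideal.Quotient.eq_zero_iff_mem.2 (Ideal.subset_span (by simp))).symm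
      · simp only [v, if_neg hlj.symm, map_zero]
        exact (Ideal.Quotient.eq_zero_iff_mem.2 (Ideal.subset_span (by simp))).symm
      · simp [v]
    have h2 := congrArg (fun φ => φ P) this
    simp only [AlgHom.comp_apply, Ideal.Quotient.mkₐ_eq_mk] at h2
    exact Ideal.Quotient.eq.1 h2.symm
  have hF : aeval v (fermatPoly k n) = ∑ m, v m ^ n := by
    rw [fermatPoly_eq_sum, map_sum]
    simp
  have hg0 : aeval v g = 0 := by
    have h1 := congrArg (aeval v) hg
    rw [map_sub, map_mul, map_mul, map_mul, aeval_X, aeval_X, hF] at h1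
    rw [Finset.sum_eq_single l] at h1
    · simp [v, hli.symm, hlj.symm] at h1
      exact h1
    · intro m _ hm
      simp [v, hm, hn.ne']
    · simp
  have hgI := hθ g
  rw [hg0, sub_zero] at hgI
  obtain ⟨a, b, rfl⟩ := Ideal.mem_span_pair.1 hgI
  have hd : (X i : MvP k) ∣ X j * (r - fermatPoly k n * b) :=
    ⟨s + fermatPoly k n * a, by linear_combination hg⟩
  rcases X_prime.dvd_or_dvd hd with h | ⟨c, hc⟩
  · exact absurd (X_dvd_X.1 h) hij
  · refine ⟨fmk k n c, ?_⟩
    rw [← map_mul, ← hc, ← sub_eq_zero, ← map_sub, fmk_eq_zero]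
    exact ⟨b, by ring⟩

/-! ### Dimensions of monomial quotients -/

/-- The monomials with exponents below `d` form a basis of `k[X] / (Xᵢ ^ dᵢ)`. -/
lemma length_box {σ : Type*} [Fintype σ] [DecidableEq σ] (d : σ → ℕ) :
    Module.length k (MvPolynomial σ k ⧸
      Ideal.span (Set.range fun i => (X i : MvPolynomial σ k) ^ d i)) = (∏ i, d i : ℕ) := by
  set I := Ideal.span (Set.range fun i => (X i : MvPolynomial σ k) ^ d i) with hI
  let e : (∀ i, Fin (d i)) → (σ →₀ ℕ) := fun m => Finsupp.equivFunOnFinite.symm fun i => (m i : ℕ)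
  have he : Function.Injective e := by
    intro m m' h
    funext i
    exact Fin.ext (DFunLike.congr_fun h i)
  let res : MvPolynomial σ k →ₗ[k] ((∀ i, Fin (d i)) → k) := LinearMap.pi fun m => lcoeff k (e m)
  have hsurj : Function.Surjective res := by
    intro v
    refine ⟨∑ m, monomial (e m) (v m), funext fun m => ?_⟩
    simp [res, coeff_monomial, he.eq_iff]
  have hker : LinearMap.ker res = I.restrictScalars k := by
    ext p
    have hrange : (Set.range fun i => (X i : MvPolynomial σ k) ^ d i) =
        (fun s => monomial s (1 : k)) '' Set.range fun i => Finsupp.single i (d i) := by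
      rw [← Set.range_comp]
      simp [Function.comp_def, X_pow_eq_monomial]
    rw [LinearMap.mem_ker, Submodule.restrictScalars_mem, hI, hrange,
      mem_ideal_span_monomial_image]
    constructor
    · intro hp m hm
      by_contra! hcon
      have hlt : ∀ i, m i < d i := by
        intro i
        by_contra! hle
        exact hcon _ ⟨i, rfl⟩ (Finsupp.single_le_iff.2 hle)
      have h0 := congrFun hp fun i => ⟨m i, hlt i⟩
      have hem : e (fun i => ⟨m i, hlt i⟩) = m := by ext i; simp [e]
      simp [res, hem] at h0
      exact (mem_support_iff.1 hm) h0
    · intro hp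
      funext m
      by_contra hne
      obtain ⟨-, ⟨i, rfl⟩, hle⟩ := hp (e m) (mem_support_iff.2 hne)
      have := Finsupp.single_le_iff.1 hle
      simp [e] at this
      omega
  have equiv : (MvPolynomial σ k ⧸ I) ≃ₗ[k] ((∀ i, Fin (d i)) → k) :=
    (Submodule.Quotient.restrictScalarsEquiv k I).symm.trans
      ((Submodule.quotEquivOfEq _ _ hker.symm).trans (res.quotKerEquivOfSurjective hsurj))
  rw [equiv.length_eq, Module.length_eq_finrank]
  simp

/-- Lengths over the Fermat ring are computed in the polynomial ring. -/
lemma lenQ_fermat (S : Set (MvP k)) :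
    lenQ k (Ideal.span (fmk k n '' S)) =
      Module.length k (MvP k ⧸ Ideal.span (insert (fermatPoly k n) S)) := by
  have h1 : Ideal.span (fmk k n '' S) =
      (Ideal.span S).map (Ideal.Quotient.mkₐ k (Ideal.span {fermatPoly k n})) :=
    (Ideal.map_span _ S).symm
  have h2 : Ideal.span (insert (fermatPoly k n) S) =
      Ideal.span {fermatPoly k n} ⊔ Ideal.span S := by
    rw [← Ideal.span_union, Set.singleton_union]
  rw [lenQ, h1, h2]
  exact (DoubleQuot.quotQuotEquivQuotSupₐ k _ _).toLinearEquiv.length_eq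

/-- Modulo two of the variables, `F` becomes the `n`-th power of the third. -/
lemma lenQ_fermat_pair (i j : Fin 3) (hij : i ≠ j) (hn : 0 < n) :
    lenQ k (Ideal.span {fmk k n (X i), fmk k n (X j)}) = n := by
  obtain ⟨l, hli, hlj, hl⟩ := exists_third i j hij
  rw [← Set.image_pair, lenQ_fermat]
  have hsum : fermatPoly k n = X i ^ n + X j ^ n + X l ^ n := by
    rw [fermatPoly_eq_sum, ← Finset.sum_subset (Finset.subset_univ {i, j, l}),
      Finset.sum_insert (by simp [hij, hli.symm]), Finset.sum_insert (by simp [hlj.symm])]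
    · simp [add_assoc]
    · intro m _ hm
      have := hl m
      simp at hm
      tauto
  have hset : Ideal.span {fermatPoly k n, X i, X j} =
      Ideal.span (Set.range fun m => (X m : MvP k) ^ (if m = l then n else 1)) := by
    have hmem : ∀ m, (X m : MvP k) ^ (if m = l then n else 1) ∈
        Ideal.span (Set.range fun m => (X m : MvP k) ^ (if m = l then n else 1)) :=
      fun m => Ideal.subset_span ⟨m, rfl⟩
    obtain ⟨N, rfl⟩ : ∃ N, n = N + 1 := ⟨n - 1, by omega⟩
    apply le_antisymm
    · have hi := hmem i
      have hj := hmem j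
      have hl' := hmem l
      rw [if_neg hli.symm, pow_one] at hi
      rw [if_neg hlj.symm, pow_one] at hj
      rw [if_pos rfl] at hl'
      rw [Ideal.span_le]
      rintro _ (rfl | rfl | rfl)
      · rw [hsum]
        exact add_mem (add_mem (Ideal.pow_mem_of_mem _ hi _ hn) (Ideal.pow_mem_of_mem _ hj _ hn)) hl'
      · exact hi
      · exact hj
    · rw [Ideal.span_le]
      rintro _ ⟨m, rfl⟩
      have hi : (X i : MvP k) ∈ Ideal.span {fermatPoly k (N + 1), X i, X j} :=
        Ideal.subset_span (by simp)
      have hj : (X j : MvP k) ∈ Ideal.span {fermatPoly k (N + 1), X i, X j} :=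
        Ideal.subset_span (by simp)
      have hF : fermatPoly k (N + 1) ∈ Ideal.span {fermatPoly k (N + 1), X i, X j} :=
        Ideal.subset_span (by simp)
      rcases hl m with rfl | rfl | rfl
      · simpa [hli.symm] using hi
      · simpa [hlj.symm] using hj
      · have heq : (X m : MvP k) ^ (N + 1) =
            fermatPoly k (N + 1) - X i ^ (N + 1) - X j ^ (N + 1) := by
          rw [hsum]; ring
        simp only [if_true]
        rw [heq]
        exact sub_mem (sub_mem hF (Ideal.pow_mem_of_mem _ hi _ hn))
          (Ideal.pow_mem_of_mem _ hj _ hn)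
  rw [hset, length_box]
  simp [Finset.prod_ite_eq']

/-- For exponents at most `n` the Fermat polynomial is already in the ideal of the powers. -/
lemma length_small {Q : ℕ} (hQ : Q ≤ n) :
    Module.length k (MvP k ⧸ Ideal.span {fermatPoly k n, X 0 ^ Q, X 1 ^ Q, X 2 ^ Q}) =
      (Q ^ 3 : ℕ) := by
  have hset : Ideal.span {fermatPoly k n, X 0 ^ Q, X 1 ^ Q, X 2 ^ Q} =
      Ideal.span (Set.range fun m => (X m : MvP k) ^ Q) := by
    have hmem : ∀ m, (X m : MvP k) ^ Q ∈ Ideal.span (Set.range fun m => (X m : MvP k) ^ Q) :=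
      fun m => Ideal.subset_span ⟨m, rfl⟩
    apply le_antisymm
    · rw [Ideal.span_le]
      rintro _ (rfl | rfl | rfl | rfl)
      · rw [fermatPoly_eq_sum]
        exact sum_mem fun m _ => Ideal.mem_of_dvd _ (pow_dvd_pow _ hQ) (hmem m)
      all_goals exact hmem _
    · refine Ideal.span_mono ?_
      rintro _ ⟨m, rfl⟩
      fin_cases m <;> simp
  rw [hset, length_box]
  simp

lemma finrank_of_length {V : Type*} [AddCommGroup V] [Module k V] {D : ℕ}
    (h : Module.length k V = D) : Module.finrank k V = D := by
  rw [Module.length_eq_rank, Cardinal.toENat_eq_natCast] at h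
  exact Module.finrank_eq_of_rank_eq h

/-- The `p ^ e`-th Frobenius power of the relation `X ^ n + Y ^ n + Z ^ n = 0`, with `n = N + 1`. -/
lemma fermat_frobenius {p : ℕ} (hp : p.Prime) [CharP k p] (e N : ℕ) :
    fmk k (N + 1) (X 0) ^ (p ^ e * (N + 1)) + fmk k (N + 1) (X 1) ^ (p ^ e * (N + 1)) +
      fmk k (N + 1) (X 2) ^ (p ^ e * (N + 1)) = 0 := by
  have := Fact.mk hp
  simp only [← map_pow, ← map_add]
  rw [fmk_eq_zero]
  simp only [mul_comm (p ^ e), pow_mul, ← add_pow_char_pow]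
  exact dvd_pow_self _ (pow_pos hp.pos e).ne'

/-- One Frobenius period: the syzygy modules for `p ^ e` and `p ^ (e + l + 1)` agree. -/
lemma fermat_iso_step {p : ℕ} (hp : p.Prime) [CharP k p] {l N : ℕ}
    (hq : p ^ (l + 1) = 2 * N + 1) {c : k} (hc : 2 * c = 1) (e : ℕ) :
    GradedIso (fun i => fmk k (N + 1) (X i ^ p ^ e))
      (fun i => fmk k (N + 1) (X i ^ p ^ (e + (l + 1))))
      (fun _ => ((p ^ e : ℕ) : ℤ)) (fun _ => ((p ^ (e + (l + 1)) : ℕ) : ℤ))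
      ((3 * (p ^ e * N) : ℕ) : ℤ) := by
  have hr := fun i => fermat_isLeftRegular (k := k) (Nat.succ_pos N) i
  have hm := fun i j h => fermat_regMod (k := k) (Nat.succ_pos N) i j h
  have hpow : p ^ (e + (l + 1)) = p ^ e + 2 * (p ^ e * N) := by
    rw [pow_add, hq]; ring
  have key := gradedIso_step (G := fermatPoly k (N + 1)) fermatPoly_isHomogeneous
    (F := fun i => X i ^ p ^ e) (W := fun i => X i ^ (p ^ e * N))
    (fun i => isHomogeneous_X_pow i _) (fun i => isHomogeneous_X_pow i _)
    (f := fun i => fmk k (N + 1) (X i) ^ p ^ e) (g := fun i => fmk k (N + 1) (X i) ^ (p ^ e * N))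
    (fun i => map_pow _ _ _) (fun i => map_pow _ _ _)
    (by
      have := fermat_frobenius (k := k) hp e N
      simp only [← pow_add] at this ⊢
      rw [show p ^ e + p ^ e * N = p ^ e * (N + 1) by ring]
      exact this)
    ((hr 2).pow _) ((hr 2).pow _) ((hm 2 0 (by decide)).pow (hr 2) _ _)
    ((hm 2 0 (by decide)).pow (hr 2) _ _)
    (by
      simp only [← pow_mul, ← pow_add]
      exact (hm 2 0 (by decide)).pow (hr 2) _ _) hc
  rw [hpow]
  convert key using 1
  · funext i; simp
  · funext i; simp only [map_pow]; ring

/-- One Frobenius period for the dimensions; `lenQ_step` applied to the `p ^ e`-th powers of the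
variables, written additively since lengths live in `ℕ∞`. -/
lemma fermat_length_step {p : ℕ} (hp : p.Prime) [CharP k p] {l N : ℕ}
    (hq : p ^ (l + 1) = 2 * N + 1) {c : k} (hc : 2 * c = 1) (e : ℕ) :
    Module.length k (MvP k ⧸ Ideal.span {fermatPoly k (N + 1), X 0 ^ p ^ (e + (l + 1)),
        X 1 ^ p ^ (e + (l + 1)), X 2 ^ p ^ (e + (l + 1))}) +
      (N * (N + 1) + 1) * (p ^ e * p ^ e * (N + 1 : ℕ)) =
    (2 * N + 1) ^ 2 * (p ^ e * p ^ e * (N + 1 : ℕ)) +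
      Module.length k (MvP k ⧸ Ideal.span {fermatPoly k (N + 1), X 0 ^ p ^ e,
        X 1 ^ p ^ e, X 2 ^ p ^ e}) := by
  have hr := fun i => (fermat_isLeftRegular (k := k) (Nat.succ_pos N) i)
  have hm := fun i j h => fermat_regMod (k := k) (Nat.succ_pos N) i j h
  have hmp := fun i j h => (hm i j h).pow (hr i) (p ^ e) (p ^ e)
  have himg : ∀ a b c : MvP k, fmk k (N + 1) '' {a, b, c} =
      {fmk k (N + 1) a, fmk k (N + 1) b, fmk k (N + 1) c} := by
    intro a b c; simp [Set.image_insert_eq]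
  have hc' : 2 * fmk k (N + 1) (C c) = 1 := by
    rw [← map_ofNat (fmk k (N + 1)) 2, ← map_mul, ← map_one (fmk k (N + 1)), ← C_1, ← hc, C_mul]
    congr 1
  have ha : ∀ i j, i ≠ j → lenQ k (Ideal.span {fmk k (N + 1) (X i) ^ p ^ e,
      fmk k (N + 1) (X j) ^ p ^ e}) = p ^ e * p ^ e * (N + 1 : ℕ) := by
    intro i j hij
    rw [lenQ_pow k (hr i) (hr j) (hm i j hij) (hm j i hij.symm),
      lenQ_fermat_pair i j hij (Nat.succ_pos N)]
    push_cast; rfl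
  have key := lenQ_step k (x := fmk k (N + 1) (X 0) ^ p ^ e) (y := fmk k (N + 1) (X 1) ^ p ^ e)
    (z := fmk k (N + 1) (X 2) ^ p ^ e) (N := N)
    (by simpa only [← pow_mul] using fermat_frobenius (k := k) hp e N)
    ((hr 0).pow _) ((hr 1).pow _) ((hr 2).pow _) (hmp 0 1 (by decide)) (hmp 1 0 (by decide))
    (hmp 0 2 (by decide)) (hmp 1 2 (by decide)) (hmp 2 1 (by decide)) hc'
    (ha 0 1 (by decide)) (ha 1 2 (by decide))
  rw [← hq] at key
  simp only [← pow_mul, ← pow_add] at key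
  simp only [← map_pow] at key
  rw [← himg, ← himg, lenQ_fermat, lenQ_fermat] at key
  rw [← pow_add]
  exact key

end Fermat

/-! ### Iterating the period -/

section Iterate

variable {k : Type*} [Field k] {p l N : ℕ}

lemma length_iterate (hp : p.Prime) [CharP k p] (hq : p ^ (l + 1) = 2 * N + 1) {c : k}
    (hc : 2 * c = 1) {r : ℕ} (hr : r < l + 1) (m : ℕ) :
    ∃ D : ℕ, Module.length k (MvP k ⧸ Ideal.span {fermatPoly k (N + 1),
        X 0 ^ p ^ (r + (l + 1) * m), X 1 ^ p ^ (r + (l + 1) * m),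
        X 2 ^ p ^ (r + (l + 1) * m)}) = D ∧
      (4 * D : ℤ) = 3 * (N + 1 : ℕ) * ((p : ℤ) ^ (2 * (r + (l + 1) * m)) - (p : ℤ) ^ (2 * r)) +
        4 * (p : ℤ) ^ (3 * r) := by
  induction m with
  | zero =>
    have h1 : 2 * p ^ r ≤ p ^ (l + 1) := by
      calc 2 * p ^ r ≤ p * p ^ r := Nat.mul_le_mul_right _ hp.two_le
        _ = p ^ (r + 1) := (pow_succ' _ _).symm
        _ ≤ p ^ (l + 1) := Nat.pow_le_pow_right hp.pos hr
    refine ⟨(p ^ r) ^ 3, by simpa using length_small (k := k) (show p ^ r ≤ N + 1 by omega), ?_⟩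
    push_cast
    ring
  | succ m ih =>
    obtain ⟨D, hD, h4⟩ := ih
    have step := fermat_length_step (k := k) hp hq hc (r + (l + 1) * m)
    rw [hD] at step
    rw [show r + (l + 1) * (m + 1) = r + (l + 1) * m + (l + 1) by ring]
    set e := r + (l + 1) * m
    generalize Module.length k (MvP k ⧸ Ideal.span {fermatPoly k (N + 1),
        X 0 ^ p ^ (e + (l + 1)), X 1 ^ p ^ (e + (l + 1)), X 2 ^ p ^ (e + (l + 1))}) = L at step
    cases L with
    | top =>
      rw [top_add] at step
      exact absurd step.symm (by exact_mod_cast ENat.natCast_ne_top _)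
    | coe D' =>
      refine ⟨D', rfl, ?_⟩
      have step' : D' + (N * (N + 1) + 1) * (p ^ e * p ^ e * (N + 1)) =
          (2 * N + 1) ^ 2 * (p ^ e * p ^ e * (N + 1)) + D := by exact_mod_cast step
      zify at step' hq
      rw [show 2 * (e + (l + 1)) = e + e + 2 * (l + 1) by ring, pow_add, pow_add,
        mul_comm 2 (l + 1), pow_mul, hq]
      rw [two_mul e, pow_add] at h4
      push_cast at h4 ⊢
      linear_combination h4 + 4 * step'

lemma gradedIso_iterate (hp : p.Prime) [CharP k p] (hq : p ^ (l + 1) = 2 * N + 1) {c : k}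
    (hc : 2 * c = 1) (r m : ℕ) :
    ∃ d : ℤ, 2 * d = 3 * ((p : ℤ) ^ (r + (l + 1) * m) - (p : ℤ) ^ r) ∧
      GradedIso (fun i => fmk k (N + 1) (X i ^ p ^ r))
        (fun i => fmk k (N + 1) (X i ^ p ^ (r + (l + 1) * m)))
        (fun _ => ((p ^ r : ℕ) : ℤ)) (fun _ => ((p ^ (r + (l + 1) * m) : ℕ) : ℤ)) d := by
  induction m with
  | zero => exact ⟨0, by simp, by simpa using GradedIso.refl _ _⟩
  | succ m ih =>
    obtain ⟨d, hd, hiso⟩ := ih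
    rw [show r + (l + 1) * (m + 1) = r + (l + 1) * m + (l + 1) by ring]
    refine ⟨_, ?_, hiso.trans (fermat_iso_step hp hq hc _)⟩
    zify at hq
    rw [pow_add _ _ (l + 1), hq]
    push_cast
    linear_combination hd

end Iterate

/-- For `p` an odd prime and `n = (p^{l+1}+1)/2`, with `e' = e % (l+1)`:
(i) the Hilbert-Kunz function satisfies `4·HKF(p^e) = 3n(p^{2e} - p^{2e'}) + 4p^{3e'}`, and
(ii) there is a graded isomorphism of shift `(3/2)(p^e - p^{e'})` from
`Syz_R(X^{p^{e'}},Y^{p^{e'}},Z^{p^{e'}})` to `Syz_R(X^{p^e},Y^{p^e},Z^{p^e})`. -/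
theorem stmt16 {k : Type*} [Field k] [IsAlgClosed k] {p : ℕ} (hp : p.Prime)
    (hpodd : Odd p) (hchar : CharP k p) (l n : ℕ) (hn : 2 * n = p ^ (l + 1) + 1) :
    ∀ e : ℕ,
      ((4 * HKF k n 1 (p ^ e) : ℤ) =
        3 * n * ((p : ℤ) ^ (2 * e) - (p : ℤ) ^ (2 * (e % (l + 1)))) +
          4 * (p : ℤ) ^ (3 * (e % (l + 1)))) ∧
      (∃ d : ℤ, 2 * d = 3 * ((p : ℤ) ^ e - (p : ℤ) ^ (e % (l + 1))) ∧
        GradedIso (fun i => fmk k n (X i ^ (p ^ (e % (l + 1)))))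
          (fun i => fmk k n (X i ^ (p ^ e)))
          (fun _ => ((p ^ (e % (l + 1)) : ℕ) : ℤ)) (fun _ => ((p ^ e : ℕ) : ℤ)) d) := by
  have h2ne : (2 : k) ≠ 0 := by
    intro h2
    have hdvd : p ∣ 2 := (CharP.cast_eq_zero_iff k p 2).1 (by exact_mod_cast h2)
    rw [(Nat.prime_dvd_prime_iff_eq hp Nat.prime_two).1 hdvd] at hpodd
    exact absurd hpodd (by decide)
  have hc : (2 : k) * 2⁻¹ = 1 := mul_inv_cancel₀ h2ne
  have hpos : 0 < p ^ (l + 1) := pow_pos hp.pos _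
  obtain ⟨N, rfl⟩ : ∃ N, n = N + 1 := ⟨n - 1, by omega⟩
  have hq : p ^ (l + 1) = 2 * N + 1 := by omega
  intro e
  obtain ⟨D, hD, h4⟩ :=
    length_iterate hp hq hc (Nat.mod_lt e (Nat.succ_pos l)) (e / (l + 1))
  have hiso := gradedIso_iterate hp hq hc (e % (l + 1)) (e / (l + 1))
  rw [Nat.mod_add_div] at hD h4 hiso
  refine ⟨?_, hiso⟩
  rw [HKF, one_mul, finrank_of_length hD]
  exact h4
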